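/- arXiv:math/0411516 — 2 statements merged into one kernel-verified Lean document; each statement's English description precedes it below -/
import Mathlib

section
/- Let V be a real vector space, F ⊆ V a convex set, x_1, …, x_N points of a set X, and K a linear map from V to real-valued functions on X such that K(μ)(x_i) > 0 for every μ ∈ F and every i. Suppose μ̂ ∈ F maximizes the log-likelihood μ ↦ (1/N) ∑_{i=1}^N log K(μ)(x_i) over F. Then for every μ ∈ F, (1/N) ∑_{i=1}^N K(μ)(x_i)/K(μ̂)(x_i) ≤ 1. -/
open MeasureTheory

/-- if `μ̂` maximizes the empirical log-likelihood
`μ ↦ (1/N) ∑ᵢ log K(μ)(xᵢ)` over a convex class `F`, then the first-order condition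
`(1/N) ∑ᵢ K(μ)(xᵢ)/K(μ̂)(xᵢ) ≤ 1` holds for every `μ ∈ F`. -/
theorem npml_first_order_condition
    {V X : Type*} [AddCommGroup V] [Module ℝ V]
    (F : Set V) (hF : Convex ℝ F)
    (N : ℕ) (hN : 0 < N) (x : Fin N → X)
    (K : V →ₗ[ℝ] (X → ℝ))
    (hpos : ∀ μ ∈ F, ∀ i, 0 < K μ (x i))
    (μhat : V) (hμhat : μhat ∈ F)
    (hmax : ∀ μ ∈ F,
      (1 / N : ℝ) * ∑ i, Real.log (K μ (x i)) ≤
        (1 / N : ℝ) * ∑ i, Real.log (K μhat (x i))) :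
    ∀ μ ∈ F, (1 / N : ℝ) * ∑ i, K μ (x i) / K μhat (x i) ≤ 1 := by
  intro μ hμ
  have hNR : (0 : ℝ) < N := by exact_mod_cast hN
  set c : Fin N → ℝ := fun i => K μ (x i) / K μhat (x i) - 1 with hc
  have key : ∀ t : ℝ, 0 < t → t ≤ 1 → ∑ i, c i / (1 + t * c i) ≤ 0 := by
    intro t ht ht1
    have hmem : (1 - t) • μhat + t • μ ∈ F :=
      hF hμhat hμ (by linarith) ht.le (by ring)
    have h1 := le_of_mul_le_mul_left (hmax _ hmem) (by positivity)
    have h2 : ∀ i, t * (c i / (1 + t * c i)) ≤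
        Real.log (K ((1 - t) • μhat + t • μ) (x i)) - Real.log (K μhat (x i)) := by
      intro i
      have p1 := hpos _ hmem i
      have p0 := hpos _ hμhat i
      have e : K ((1 - t) • μhat + t • μ) (x i) / K μhat (x i) = 1 + t * c i := by
        simp only [map_add, map_smul, Pi.add_apply, Pi.smul_apply, smul_eq_mul, hc]
        field_simp
        ring
      have p2 : 0 < 1 + t * c i := by rw [← e]; positivity
      rw [← Real.log_div p1.ne' p0.ne', e]
      have h3 := Real.one_sub_inv_le_log_of_pos p2
      have h4 : t * (c i / (1 + t * c i)) = 1 - (1 + t * c i)⁻¹ := by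
        field_simp
        ring
      linarith
    have h5 := Finset.sum_le_sum (fun i (_ : i ∈ Finset.univ) => h2 i)
    rw [← Finset.mul_sum, Finset.sum_sub_distrib] at h5
    by_contra hcon
    have := mul_pos ht (not_le.mp hcon)
    linarith
  have hlim : Filter.Tendsto (fun t : ℝ => ∑ i, c i / (1 + t * c i))
      (nhdsWithin 0 (Set.Ioi 0)) (nhds (∑ i, c i)) := by
    have hcont : ContinuousAt (fun t : ℝ => ∑ i, c i / (1 + t * c i)) 0 := by
      refine tendsto_finsetSum _ fun i _ => ?_
      have : ContinuousAt (fun t : ℝ => c i / (1 + t * c i)) 0 :=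
        ContinuousAt.div (by fun_prop) (by fun_prop) (by simp)
      exact this
    have := hcont.tendsto
    simp only [zero_mul, add_zero, div_one] at this
    exact this.mono_left nhdsWithin_le_nhds
  have hle : ∑ i, c i ≤ 0 := by
    refine le_of_tendsto hlim ?_
    filter_upwards [Ioc_mem_nhdsGT (zero_lt_one : (0 : ℝ) < 1)] with t ht
    exact key t ht.1 ht.2
  simp only [hc, Finset.sum_sub_distrib, Finset.sum_const, Finset.card_univ, Fintype.card_fin,
    nsmul_eq_mul, mul_one] at hle
  rw [one_div, inv_mul_le_iff₀ hNR]
  linarith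
end

section
/- Let V be a real vector space, F ⊆ V a convex set, x_1, …, x_N points of a set X, and K a linear map from V to real-valued functions on X such that K(μ)(x_i) > 0 for every μ ∈ F and every i. Suppose μ̂ ∈ F satisfies (1/N) ∑_{i=1}^N K(μ)(x_i)/K(μ̂)(x_i) ≤ 1 for every μ ∈ F. Then μ̂ maximizes the log-likelihood over F: for every μ ∈ F, (1/N) ∑_{i=1}^N log K(μ)(x_i) ≤ (1/N) ∑_{i=1}^N log K(μ̂)(x_i). -/
/-- if `μ̂` in a convex class `F` satisfies the first-order condition
`(1/N) ∑ᵢ K(μ)(xᵢ)/K(μ̂)(xᵢ) ≤ 1` for every `μ ∈ F`, then `μ̂` maximizes the empirical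
log-likelihood `μ ↦ (1/N) ∑ᵢ log K(μ)(xᵢ)` over `F`. -/
theorem first_order_condition_implies_npml
    {V X : Type*} [AddCommGroup V] [Module ℝ V]
    (F : Set V) (hF : Convex ℝ F)
    (N : ℕ) (hN : 0 < N) (x : Fin N → X)
    (K : V →ₗ[ℝ] (X → ℝ))
    (hpos : ∀ μ ∈ F, ∀ i, 0 < K μ (x i))
    (μhat : V) (hμhat : μhat ∈ F)
    (hfoc : ∀ μ ∈ F, (1 / N : ℝ) * ∑ i, K μ (x i) / K μhat (x i) ≤ 1) :
    ∀ μ ∈ F,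
      (1 / N : ℝ) * ∑ i, Real.log (K μ (x i)) ≤
        (1 / N : ℝ) * ∑ i, Real.log (K μhat (x i)) := by
  intro μ hμ
  have hN' : (0 : ℝ) < N := by exact_mod_cast hN
  have h1 : ∑ i, K μ (x i) / K μhat (x i) ≤ N := by
    have h := hfoc μ hμ
    rw [one_div, inv_mul_le_iff₀ hN', mul_one] at h
    exact h
  have h2 : ∑ i, (Real.log (K μ (x i)) - Real.log (K μhat (x i))) ≤
      ∑ i, (K μ (x i) / K μhat (x i) - 1) := by
    refine Finset.sum_le_sum fun i _ => ?_
    rw [← Real.log_div (hpos μ hμ i).ne' (hpos μhat hμhat i).ne']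
    exact Real.log_le_sub_one_of_pos (div_pos (hpos μ hμ i) (hpos μhat hμhat i))
  rw [Finset.sum_sub_distrib, Finset.sum_sub_distrib] at h2
  simp only [Finset.sum_const, Finset.card_univ, Fintype.card_fin, nsmul_eq_mul, mul_one] at h2
  exact mul_le_mul_of_nonneg_left (by linarith) (by positivity)
end
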